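/- (Dual Zygmund–Bonami) Let τ ∈ ℕ and let {a_λ}_{λ ∈ lac_τ^1} be a finitely supported collection of complex coefficients with Σ_λ |a_λ|² = 1. Then the trigonometric polynomial p(y) = Σ_{λ ∈ lac_τ^1} a_λ e^{−2πiλy} satisfies ‖p‖_{exp(L^{2/τ})([0,1])} ≲_τ 1, equivalently sup_{p' ≥ 2} (p')^{−τ/2} ‖p‖_{L^{p'}([0,1])} ≲_τ 1. -/

import Mathlib

open MeasureTheory Real Set

noncomputable section

/-- An interval, represented by its pair of endpoints, is dyadic. -/
def IsDyadicI (p : ℝ × ℝ) : Prop := ∃ k n : ℤ, p.1 = n * (2:ℝ)^k ∧ p.2 = (n+1) * (2:ℝ)^k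

/-- The Whitney partition of the interval `I = [I.1, I.2)`: the maximal dyadic subintervals
`L ⊆ I` with `dist(L, ℝ \ I) = |L|`. -/
def WhitneyP (I : ℝ × ℝ) : Set (ℝ × ℝ) :=
  {L | IsDyadicI L ∧ I.1 ≤ L.1 ∧ L.2 ≤ I.2 ∧
       min (L.1 - I.1) (I.2 - L.2) = L.2 - L.1 ∧
       ∀ L' : ℝ × ℝ, IsDyadicI L' → I.1 ≤ L'.1 → L'.2 ≤ I.2 →
         min (L'.1 - I.1) (I.2 - L'.2) = L'.2 - L'.1 →
         L'.1 ≤ L.1 → L.2 ≤ L'.2 → L = L'}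

/-- The standard Littlewood–Paley collection of intervals of order `τ`:
`Λ₁ = {±[2^k, 2^(k+1))}`, and `Λ_(τ+1) = ⋃_{I ∈ Λ_τ} W(I)`. -/
def Lambda : ℕ → Set (ℝ × ℝ)
  | 0 => ∅
  | 1 => {p | ∃ k : ℤ, p = ((2:ℝ)^k, (2:ℝ)^(k+1)) ∨ p = (-(2:ℝ)^(k+1), -(2:ℝ)^k)}
  | (n+2) => ⋃ I ∈ Lambda (n+1), WhitneyP I

/-- The set of endpoints of intervals of `Λ_τ` (with `lac_0 = {0}`). -/
def lac (τ : ℕ) : Set ℝ :=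
  if τ = 0 then {0} else {x | ∃ p ∈ Lambda τ, x = p.1 ∨ x = p.2}

/-- The truncated lacunary set `lac_τ^n`: endpoints of intervals in `Λ_τ` of length `≥ n`. -/
def lacT (τ : ℕ) (n : ℝ) : Set ℝ :=
  if τ = 0 then {0} else {x | ∃ p ∈ Lambda τ, n ≤ p.2 - p.1 ∧ (x = p.1 ∨ x = p.2)}

/-!
Translation by `2 ^ -(n + 1)` fixes the characters whose frequency is divisible by `2 ^ (n + 1)`
and changes the sign of those whose frequency is an odd multiple of `2 ^ n`. Hence, if `f` collects
the frequencies of the first kind and `g` those of the second, `f + g` and `f - g` have the same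
`L^q` norm, and the two-point inequality for `‖a ± b‖ ^ q`, i.e. the `2`-smoothness of `L^q`, gives
`‖f + g‖_q² ≤ ‖f‖_q² + (1 + 2q) ‖g‖_q²`. Peeling off the `2`-adic valuations one at a time, from the
lowest, costs the factor `1 + 2q` once, whatever the number of valuations. The lacunary numbers of
order `τ + 1` with lowest term `±2 ^ n` lie in two translates of those of order `τ`, so after `τ`
rounds `‖p‖_q² ≤ (2 (1 + 2q)) ^ τ ∑ ‖a_λ‖² ≤ (5q) ^ τ ∑ ‖a_λ‖²`.
-/

open scoped NNReal ENNReal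

/-! ### Two-point inequality -/

lemma one_add_rpow_add_one_sub_rpow_le {r t : ℝ} (hr : 0 ≤ r) (ht : |t| ≤ 1) :
    (1 + t) ^ r + (1 - t) ^ r ≤ 2 * (1 + r * t ^ 2) ^ r := by
  obtain ⟨hneg, hpos⟩ := abs_le.mp ht
  rcases le_total (r * t ^ 2) 2 with hsmall | hlarge
  · have rpow_le_exp {u : ℝ} (hu : 0 ≤ 1 + u) : (1 + u) ^ r ≤ exp (r * u) := by
      rw [mul_comm, exp_mul]
      exact rpow_le_rpow hu (by linarith [add_one_le_exp u]) hr
    have exp_le : exp (r * t ^ 2 / 2) ≤ 1 + r * t ^ 2 := by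
      have hnonneg : 0 ≤ r * t ^ 2 / 2 := by positivity
      have := abs_exp_sub_one_le (x := r * t ^ 2 / 2) (by rw [abs_of_nonneg hnonneg]; linarith)
      rw [abs_of_nonneg hnonneg] at this
      linarith [le_abs_self (exp (r * t ^ 2 / 2) - 1)]
    calc (1 + t) ^ r + (1 - t) ^ r ≤ exp (r * t) + exp (-(r * t)) := by
          simpa [sub_eq_add_neg] using
            add_le_add (rpow_le_exp (by linarith)) (rpow_le_exp (u := -t) (by linarith))
      _ = 2 * cosh (r * t) := by rw [cosh_eq]; ring
      _ ≤ 2 * exp ((r * t) ^ 2 / 2) := by gcongr; exact cosh_le_exp_half_sq _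
      _ = 2 * exp (r * t ^ 2 / 2) ^ r := by rw [← exp_mul]; ring_nf
      _ ≤ 2 * (1 + r * t ^ 2) ^ r := by gcongr
  · have hplus : (1 + t) ^ r ≤ (1 + r * t ^ 2) ^ r :=
      rpow_le_rpow (by linarith) (by linarith) hr
    have hminus : (1 - t) ^ r ≤ (1 + r * t ^ 2) ^ r :=
      rpow_le_rpow (by linarith) (by linarith) hr
    linarith

lemma add_rpow_add_sub_rpow_le {r x y : ℝ} (hr : 0 ≤ r) (h : |y| ≤ x) :
    (x + y) ^ r + (x - y) ^ r ≤ 2 * (x + r * (y ^ 2 / x)) ^ r := by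
  obtain rfl | hx := ((abs_nonneg y).trans h).eq_or_lt
  · obtain rfl : y = 0 := abs_nonpos_iff.mp h
    simp [two_mul]
  have ht : |y / x| ≤ 1 := by rwa [abs_div, abs_of_pos hx, div_le_one hx]
  obtain ⟨hneg, hpos⟩ := abs_le.mp ht
  calc (x + y) ^ r + (x - y) ^ r = (x * (1 + y / x)) ^ r + (x * (1 - y / x)) ^ r := by
        congr 2 <;> field_simp
    _ = x ^ r * ((1 + y / x) ^ r + (1 - y / x) ^ r) := by
        rw [mul_rpow hx.le (by linarith), mul_rpow hx.le (by linarith), mul_add]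
    _ ≤ x ^ r * (2 * (1 + r * (y / x) ^ 2) ^ r) := by
        gcongr
        exact one_add_rpow_add_one_sub_rpow_le hr ht
    _ = 2 * (x * (1 + r * (y / x) ^ 2)) ^ r := by
        rw [mul_rpow hx.le (by positivity)]
        ring
    _ = 2 * (x + r * (y ^ 2 / x)) ^ r := by
        congr 2
        field_simp

lemma norm_add_rpow_add_norm_sub_rpow_le {E : Type*} [NormedAddCommGroup E]
    [InnerProductSpace ℝ E] {q : ℝ} (hq : 0 ≤ q) (a b : E) :
    ‖a + b‖ ^ q + ‖a - b‖ ^ q ≤ 2 * (‖a‖ ^ 2 + (1 + 2 * q) * ‖b‖ ^ 2) ^ (q / 2) := by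
  have rpow_eq (v : E) : ‖v‖ ^ q = (‖v‖ ^ 2) ^ (q / 2) := by
    rw [← rpow_natCast_mul (norm_nonneg v)]
    congr 1
    push_cast
    ring
  have inner_le := abs_real_inner_le_norm a b
  have hsq : (2 * inner ℝ a b) ^ 2 / (‖a‖ ^ 2 + ‖b‖ ^ 2) ≤ 4 * ‖b‖ ^ 2 := by
    refine div_le_of_le_mul₀ (by positivity) (by positivity) ?_
    calc (2 * inner ℝ a b) ^ 2 = 4 * |inner ℝ a b| ^ 2 := by rw [sq_abs]; ring
      _ ≤ 4 * (‖a‖ * ‖b‖) ^ 2 := by gcongr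
      _ ≤ 4 * ‖b‖ ^ 2 * (‖a‖ ^ 2 + ‖b‖ ^ 2) := by linarith [sq_nonneg (‖b‖ ^ 2)]
  calc ‖a + b‖ ^ q + ‖a - b‖ ^ q
      = (‖a‖ ^ 2 + ‖b‖ ^ 2 + 2 * inner ℝ a b) ^ (q / 2) +
          (‖a‖ ^ 2 + ‖b‖ ^ 2 - 2 * inner ℝ a b) ^ (q / 2) := by
        rw [rpow_eq, rpow_eq, norm_add_sq_real, norm_sub_sq_real]
        ring_nf
    _ ≤ 2 * (‖a‖ ^ 2 + ‖b‖ ^ 2 +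
          q / 2 * ((2 * inner ℝ a b) ^ 2 / (‖a‖ ^ 2 + ‖b‖ ^ 2))) ^ (q / 2) := by
        refine add_rpow_add_sub_rpow_le (by positivity) ?_
        rw [abs_mul, abs_two]
        linarith [two_mul_le_add_sq ‖a‖ ‖b‖]
    _ ≤ 2 * (‖a‖ ^ 2 + ‖b‖ ^ 2 + q / 2 * (4 * ‖b‖ ^ 2)) ^ (q / 2) := by gcongr
    _ = 2 * (‖a‖ ^ 2 + (1 + 2 * q) * ‖b‖ ^ 2) ^ (q / 2) := by ring_nf

/-! ### Smoothness of the `L^q` norm -/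

section LpNorm

variable {α E : Type*} [MeasurableSpace α] {μ : Measure α} [NormedAddCommGroup E]

lemma integral_norm_rpow_eq_lpNorm_rpow {q : ℝ≥0} (hq : q ≠ 0) {f : α → E}
    (hf : AEStronglyMeasurable f μ) : ∫ x, ‖f x‖ ^ (q : ℝ) ∂μ = lpNorm f q μ ^ (q : ℝ) := by
  rw [lpNorm_nnreal_eq_integral_norm_rpow hq hf, rpow_inv_rpow (by positivity) (by simpa using hq)]

lemma integrable_norm_rpow_of_memLp {q : ℝ≥0} (hq : q ≠ 0) {f : α → E} (hf : MemLp f q μ) :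
    Integrable (fun x ↦ ‖f x‖ ^ (q : ℝ)) μ :=
  hf.integrable_norm_rpow (mod_cast hq) ENNReal.coe_ne_top

lemma memLp_norm_sq {p : ℝ≥0∞} {f : α → E} (hf : MemLp f p μ) :
    MemLp (fun x ↦ ‖f x‖ ^ 2) (p / 2) μ := by
  simpa using hf.norm_rpow_div 2

lemma lpNorm_norm_sq {f : α → E} (hf : AEStronglyMeasurable f μ) (p : ℝ≥0∞) :
    lpNorm (fun x ↦ ‖f x‖ ^ 2) (p / 2) μ = lpNorm f p μ ^ 2 := by
  have h := eLpNorm_norm_rpow (p := p / 2) (μ := μ) f two_pos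
  simp only [rpow_two, ENNReal.ofReal_ofNat, ENNReal.rpow_two,
    ENNReal.div_mul_cancel two_ne_zero ENNReal.ofNat_ne_top] at h
  have hsq : AEStronglyMeasurable (fun x ↦ ‖f x‖ ^ 2) μ := hf.norm.pow 2
  rw [← toReal_eLpNorm hsq, ← toReal_eLpNorm hf, h, ENNReal.toReal_pow]

lemma lpNorm_norm_sq_add_mul_norm_sq_le {p : ℝ≥0∞} (hp : 2 ≤ p) {f g : α → E} {c : ℝ} (hc : 0 ≤ c)
    (hf : MemLp f p μ) (hg : AEStronglyMeasurable g μ) :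
    lpNorm (fun x ↦ ‖f x‖ ^ 2 + c * ‖g x‖ ^ 2) (p / 2) μ ≤
      lpNorm f p μ ^ 2 + c * lpNorm g p μ ^ 2 := by
  have hp₁ : 1 ≤ p / 2 := by
    rwa [ENNReal.le_div_iff_mul_le (.inl two_ne_zero) (.inl ENNReal.ofNat_ne_top), one_mul]
  calc lpNorm (fun x ↦ ‖f x‖ ^ 2 + c * ‖g x‖ ^ 2) (p / 2) μ
      ≤ lpNorm (fun x ↦ ‖f x‖ ^ 2) (p / 2) μ + lpNorm (c • fun x ↦ ‖g x‖ ^ 2) (p / 2) μ :=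
        lpNorm_add_le (memLp_norm_sq hf) hp₁
    _ = lpNorm f p μ ^ 2 + c * lpNorm g p μ ^ 2 := by
        rw [lpNorm_const_smul, lpNorm_norm_sq hf.1, lpNorm_norm_sq hg, coe_nnnorm,
          Real.norm_of_nonneg hc]

variable [InnerProductSpace ℝ E] {q : ℝ≥0} {f g : α → E}

lemma lpNorm_add_rpow_add_lpNorm_sub_rpow_le (hq : 2 ≤ q) (hf : MemLp f q μ) (hg : MemLp g q μ) :
    lpNorm (f + g) q μ ^ (q : ℝ) + lpNorm (f - g) q μ ^ (q : ℝ) ≤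
      2 * (lpNorm f q μ ^ 2 + (1 + 2 * q) * lpNorm g q μ ^ 2) ^ (q / 2 : ℝ) := by
  have hq₀ : q ≠ 0 := (two_pos.trans_le hq).ne'
  have hr₀ : q / 2 ≠ 0 := by positivity
  set F : α → ℝ := fun x ↦ ‖f x‖ ^ 2 + (1 + 2 * q) * ‖g x‖ ^ 2
  have hF : MemLp F (q / 2 : ℝ≥0) μ := by
    rw [ENNReal.coe_div two_ne_zero]
    exact (memLp_norm_sq hf).add ((memLp_norm_sq hg).const_mul _)
  have lpNorm_F : lpNorm F (q / 2 : ℝ≥0) μ ≤ lpNorm f q μ ^ 2 + (1 + 2 * q) * lpNorm g q μ ^ 2 := by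
    rw [ENNReal.coe_div two_ne_zero]
    exact lpNorm_norm_sq_add_mul_norm_sq_le (mod_cast hq) (by positivity) hf hg.1
  have hadd := integrable_norm_rpow_of_memLp hq₀ (hf.add hg)
  have hsub := integrable_norm_rpow_of_memLp hq₀ (hf.sub hg)
  calc lpNorm (f + g) q μ ^ (q : ℝ) + lpNorm (f - g) q μ ^ (q : ℝ)
      = ∫ x, ‖(f + g) x‖ ^ (q : ℝ) + ‖(f - g) x‖ ^ (q : ℝ) ∂μ := by
        rw [integral_add hadd hsub, integral_norm_rpow_eq_lpNorm_rpow hq₀ (hf.add hg).1,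
          integral_norm_rpow_eq_lpNorm_rpow hq₀ (hf.sub hg).1]
    _ ≤ ∫ x, 2 * ‖F x‖ ^ ((q / 2 : ℝ≥0) : ℝ) ∂μ := by
        have hint := (integrable_norm_rpow_of_memLp hr₀ hF).const_mul 2
        refine integral_mono (hadd.add hsub) hint fun x ↦ ?_
        have hFx : ‖F x‖ = F x := Real.norm_of_nonneg (by positivity)
        simp only [hFx]
        exact norm_add_rpow_add_norm_sub_rpow_le q.coe_nonneg (f x) (g x)
    _ = 2 * lpNorm F (q / 2 : ℝ≥0) μ ^ (q / 2 : ℝ) := by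
        rw [integral_const_mul, integral_norm_rpow_eq_lpNorm_rpow hr₀ hF.1]
        rfl
    _ ≤ 2 * (lpNorm f q μ ^ 2 + (1 + 2 * q) * lpNorm g q μ ^ 2) ^ (q / 2 : ℝ) := by
        gcongr
        exact lpNorm_nonneg

lemma lpNorm_add_sq_le_of_lpNorm_sub_eq (hq : 2 ≤ q) (hf : MemLp f q μ) (hg : MemLp g q μ)
    (h : lpNorm (f - g) q μ = lpNorm (f + g) q μ) :
    lpNorm (f + g) q μ ^ 2 ≤ lpNorm f q μ ^ 2 + (1 + 2 * q) * lpNorm g q μ ^ 2 := by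
  have hq₀ : (0 : ℝ) < q / 2 := by positivity
  have key := lpNorm_add_rpow_add_lpNorm_sub_rpow_le hq hf hg
  rw [h, ← two_mul, mul_le_mul_iff_right₀ two_pos] at key
  rw [← rpow_le_rpow_iff (by positivity) (by positivity) hq₀, ← rpow_natCast_mul lpNorm_nonneg]
  simpa [mul_div_cancel₀] using key

end LpNorm

/-! ### Trigonometric polynomials -/

lemma fourier_add_index {T : ℝ} (n : ℤ) (x y : AddCircle T) :
    fourier n (x + y) = fourier n x * fourier n y := by
  simp only [fourier_apply, smul_add, AddCircle.toCircle_add, Circle.coe_mul]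

/-- The trigonometric polynomial `∑ l ∈ s, a l * exp (-2πi l y)` on `ℝ / ℤ`. -/
def trigPoly (s : Finset ℤ) (a : ℤ → ℂ) : C(UnitAddCircle, ℂ) :=
  ∑ l ∈ s, a l • fourier (-l)

section trigPoly

variable {s t : Finset ℤ} {a : ℤ → ℂ} {p : ℝ≥0∞} {n : ℕ}

lemma trigPoly_apply (y : UnitAddCircle) : trigPoly s a y = ∑ l ∈ s, a l * fourier (-l) y := by
  simp only [trigPoly, ContinuousMap.coe_sum, Finset.sum_apply, ContinuousMap.smul_apply,
    smul_eq_mul]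

lemma coe_trigPoly_filter_add_filter_not (P : ℤ → Prop) [DecidablePred P] :
    ⇑(trigPoly (s.filter P) a) + ⇑(trigPoly (s.filter (¬ P ·)) a) = trigPoly s a := by
  rw [← ContinuousMap.coe_add, trigPoly, trigPoly, Finset.sum_filter_add_sum_filter_not, trigPoly]

lemma trigPoly_apply_add_of_forall {c : UnitAddCircle} {w : ℂ}
    (h : ∀ l ∈ s, fourier (-l) c = w) (y : UnitAddCircle) :
    trigPoly s a (y + c) = w * trigPoly s a y := by
  rw [trigPoly_apply, trigPoly_apply, Finset.mul_sum]
  refine Finset.sum_congr rfl fun l hl ↦ ?_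
  rw [fourier_add_index, h l hl]
  ring

lemma fourier_mul_trigPoly_apply (m : ℤ) (y : UnitAddCircle) :
    fourier m y * trigPoly s a y =
      trigPoly (s.map (Equiv.subRight m).toEmbedding) (fun l ↦ a (l + m)) y := by
  rw [trigPoly_apply, trigPoly_apply, Finset.sum_map, Finset.mul_sum]
  refine Finset.sum_congr rfl fun l _ ↦ ?_
  simp only [Equiv.coe_toEmbedding, Equiv.subRight_apply, sub_add_cancel]
  rw [neg_sub, sub_eq_add_neg, fourier_add]
  ring

lemma memLp_trigPoly : MemLp (trigPoly s a) p volume :=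
  (trigPoly s a).continuous.memLp_of_hasCompactSupport (.of_compactSpace _)

lemma fourier_two_pow_mul_apply (n : ℕ) (m : ℤ) :
    fourier (2 ^ n * m) (((2 ^ (n + 1))⁻¹ : ℝ) : UnitAddCircle) = (-1 : ℂ) ^ m := by
  rw [fourier_coe_apply, ← Complex.exp_pi_mul_I, ← Complex.exp_int_mul]
  congr 1
  push_cast
  field_simp
  ring

lemma fourier_apply_of_emultiplicity_gt {l : ℤ} (hl : (n : ℕ∞) < emultiplicity 2 l) :
    fourier (-l) (((2 ^ (n + 1))⁻¹ : ℝ) : UnitAddCircle) = 1 := by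
  obtain ⟨m, rfl⟩ := pow_dvd_of_le_emultiplicity (Order.add_one_le_of_lt hl)
  rw [pow_succ, mul_assoc, ← mul_neg, fourier_two_pow_mul_apply, Even.neg_one_zpow (by simp)]

lemma fourier_apply_of_emultiplicity_eq {l : ℤ} (hl : emultiplicity 2 l = n) :
    fourier (-l) (((2 ^ (n + 1))⁻¹ : ℝ) : UnitAddCircle) = -1 := by
  obtain ⟨⟨m, rfl⟩, hm⟩ := emultiplicity_eq_coe.mp hl
  have hodd : Odd m := by
    rw [← Int.not_even_iff_odd, even_iff_two_dvd]
    exact fun h ↦ hm (pow_succ (2 : ℤ) n ▸ mul_dvd_mul_left _ h)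
  rw [← mul_neg, fourier_two_pow_mul_apply, hodd.neg.neg_one_zpow]

/-- Translation by `2 ^ -(n + 1)` fixes the first polynomial and changes the sign of the second. -/
lemma lpNorm_trigPoly_sub_eq_add (hs : ∀ l ∈ s, (n : ℕ∞) < emultiplicity 2 l)
    (ht : ∀ l ∈ t, emultiplicity 2 l = n) :
    lpNorm (⇑(trigPoly s a) - ⇑(trigPoly t a)) p volume =
      lpNorm (⇑(trigPoly s a) + ⇑(trigPoly t a)) p volume := by
  set c : UnitAddCircle := (((2 ^ (n + 1))⁻¹ : ℝ) : UnitAddCircle)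
  have hshift : ⇑(trigPoly s a) - ⇑(trigPoly t a) =
      (⇑(trigPoly s a) + ⇑(trigPoly t a)) ∘ (· + c) := by
    ext y
    simp only [Pi.sub_apply, Function.comp_apply, Pi.add_apply,
      trigPoly_apply_add_of_forall fun l hl ↦ fourier_apply_of_emultiplicity_gt (hs l hl),
      trigPoly_apply_add_of_forall fun l hl ↦ fourier_apply_of_emultiplicity_eq (ht l hl), c]
    ring
  have hadd : AEStronglyMeasurable (⇑(trigPoly s a) + ⇑(trigPoly t a)) volume :=
    ((trigPoly s a).continuous.add (trigPoly t a).continuous).aestronglyMeasurable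
  have hc := measurePreserving_add_right volume c
  rw [hshift, ← toReal_eLpNorm (hadd.comp_measurePreserving hc), ← toReal_eLpNorm hadd,
    eLpNorm_comp_measurePreserving hadd hc]

end trigPoly

/-! ### `Λ(p)` sets -/

/-- `A` is a `Λ(p)` set in the sense of Rudin: trigonometric polynomials with frequencies in `A`
have `L^p` norm at most `√K` times their `L^2` norm, the latter being written through the
coefficients. -/
def IsRudinSet (p : ℝ≥0∞) (K : ℝ) (A : Set ℤ) : Prop :=
  ∀ (s : Finset ℤ) (a : ℤ → ℂ), (s : Set ℤ) ⊆ A →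
    lpNorm (trigPoly s a) p volume ^ 2 ≤ K * ∑ l ∈ s, ‖a l‖ ^ 2

namespace IsRudinSet

variable {p : ℝ≥0∞} {K : ℝ} {A B : Set ℤ}

lemma mono (hB : IsRudinSet p K B) (h : A ⊆ B) : IsRudinSet p K A :=
  fun s a hs ↦ hB s a (hs.trans h)

lemma singleton (hp : p ≠ 0) (n : ℤ) : IsRudinSet p 1 {n} := by
  intro s a hs
  rcases Finset.subset_singleton_iff.mp (Finset.coe_subset_singleton.mp hs) with rfl | rfl
  · simp [trigPoly]
  · have hnorm : (fun y ↦ ‖trigPoly {n} a y‖) = fun _ ↦ ‖a n‖ := by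
      ext y
      simp [trigPoly_apply, fourier_apply, Circle.norm_coe]
    rw [← lpNorm_norm (memLp_trigPoly (p := p)).1, hnorm, lpNorm_const hp (NeZero.ne _)]
    simp [Measure.real]

lemma preimage_sub (h : IsRudinSet p K A) (m : ℤ) : IsRudinSet p K ((· - m) ⁻¹' A) := by
  intro s a hs
  have hmaps : (s.map (Equiv.subRight m).toEmbedding : Set ℤ) ⊆ A := by
    simpa [Set.subset_def] using hs
  have key := h _ (fun l ↦ a (l + m)) hmaps
  have hnorm : (fun y ↦ ‖trigPoly (s.map (Equiv.subRight m).toEmbedding) (fun l ↦ a (l + m)) y‖) =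
      fun y ↦ ‖trigPoly s a y‖ := by
    ext y
    rw [← fourier_mul_trigPoly_apply, norm_mul, fourier_apply, Circle.norm_coe, one_mul]
  rw [← lpNorm_norm (memLp_trigPoly (p := p)).1, hnorm,
    lpNorm_norm (memLp_trigPoly (p := p)).1] at key
  simpa using key

lemma union (hp : 1 ≤ p) (hA : IsRudinSet p K A) (hB : IsRudinSet p K B) :
    IsRudinSet p (2 * K) (A ∪ B) := by
  classical
  intro s a hs
  set f := trigPoly (s.filter (· ∈ A)) a
  set g := trigPoly (s.filter (· ∉ A)) a
  have hf := hA (s.filter (· ∈ A)) a fun l hl ↦ (Finset.mem_filter.mp hl).2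
  have hg := hB (s.filter (· ∉ A)) a fun l hl ↦ by
    obtain ⟨hl, hlA⟩ := Finset.mem_filter.mp hl
    exact (hs hl).resolve_left hlA
  calc lpNorm (trigPoly s a) p volume ^ 2 ≤ (lpNorm f p volume + lpNorm g p volume) ^ 2 := by
        gcongr
        · exact lpNorm_nonneg
        · rw [← coe_trigPoly_filter_add_filter_not (· ∈ A)]
          exact lpNorm_add_le memLp_trigPoly hp
    _ ≤ 2 * (lpNorm f p volume ^ 2 + lpNorm g p volume ^ 2) := add_sq_le
    _ ≤ 2 * (K * ∑ l ∈ s with l ∈ A, ‖a l‖ ^ 2 + K * ∑ l ∈ s with l ∉ A, ‖a l‖ ^ 2) := by gcongr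
    _ = 2 * K * ∑ l ∈ s, ‖a l‖ ^ 2 := by
        rw [← Finset.sum_filter_add_sum_filter_not s (· ∈ A)]
        ring

lemma of_forall_emultiplicity_eq {q : ℝ≥0} (hq : 2 ≤ q) (h₀ : 0 ∉ A)
    (h : ∀ n : ℕ, IsRudinSet q K {l ∈ A | emultiplicity 2 l = n}) :
    IsRudinSet q ((1 + 2 * q) * K) A := by
  intro s a hs
  induction s using Finset.strongInduction with
  | H s ih =>
    obtain rfl | hne := s.eq_empty_or_nonempty
    · simp [trigPoly]
    obtain ⟨l₀, hl₀, hmin⟩ := s.exists_min_image (emultiplicity 2) hne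
    obtain ⟨n, hn⟩ : ∃ n : ℕ, emultiplicity 2 l₀ = n :=
      ⟨_, FiniteMultiplicity.emultiplicity_eq_multiplicity
        (Int.finiteMultiplicity_iff.mpr ⟨by decide, fun h ↦ h₀ (h ▸ hs hl₀)⟩)⟩
    set P : ℤ → Prop := fun l ↦ emultiplicity 2 l ≠ n
    have hhigh : ∀ l ∈ s.filter P, (n : ℕ∞) < emultiplicity 2 l := fun l hl ↦ by
      obtain ⟨hl, hln⟩ := Finset.mem_filter.mp hl
      exact lt_of_le_of_ne (hn ▸ hmin l hl) hln.symm
    have hlow : ∀ l ∈ s.filter (¬ P ·), emultiplicity 2 l = n := fun l hl ↦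
      not_not.mp (Finset.mem_filter.mp hl).2
    have hhigh_bound := ih (s.filter P) (Finset.filter_ssubset.mpr ⟨l₀, hl₀, not_not.mpr hn⟩)
      ((Finset.coe_subset.mpr (s.filter_subset P)).trans hs)
    have hlow_bound := h n (s.filter (¬ P ·)) a fun l hl ↦
      ⟨hs (Finset.mem_of_mem_filter l hl), hlow l hl⟩
    calc lpNorm (trigPoly s a) q volume ^ 2
        ≤ lpNorm (trigPoly (s.filter P) a) q volume ^ 2 +
            (1 + 2 * q) * lpNorm (trigPoly (s.filter (¬ P ·)) a) q volume ^ 2 := by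
          rw [← coe_trigPoly_filter_add_filter_not P]
          exact lpNorm_add_sq_le_of_lpNorm_sub_eq hq memLp_trigPoly memLp_trigPoly
            (lpNorm_trigPoly_sub_eq_add hhigh hlow)
      _ ≤ (1 + 2 * q) * K * ∑ l ∈ s with P l, ‖a l‖ ^ 2 +
            (1 + 2 * q) * (K * ∑ l ∈ s with ¬ P l, ‖a l‖ ^ 2) := by gcongr
      _ = (1 + 2 * q) * K * ∑ l ∈ s, ‖a l‖ ^ 2 := by
          rw [← Finset.sum_filter_add_sum_filter_not s P]
          ring

end IsRudinSet

/-! ### Lacunary integers -/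

/-- The lacunary integers of order `τ`, i.e. the sums `±2^{n₁} ± ⋯ ± 2^{n_τ}` with
`n₁ > ⋯ > n_τ ≥ 0`, built by appending the lowest term. -/
def lacInt : ℕ → Set ℤ
  | 0 => {0}
  | τ + 1 => {l | ∃ n : ℕ, ∃ m ∈ lacInt τ, 2 ^ (n + 1) ∣ m ∧ (l = m + 2 ^ n ∨ l = m - 2 ^ n)}

lemma exists_of_mem_lacInt_succ {τ : ℕ} {l : ℤ} (hl : l ∈ lacInt (τ + 1)) :
    ∃ n : ℕ, emultiplicity 2 l = n ∧ (l - 2 ^ n ∈ lacInt τ ∨ l + 2 ^ n ∈ lacInt τ) := by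
  obtain ⟨n, m, hm, hdvd, hl⟩ := hl
  have hpow : emultiplicity (2 : ℤ) (2 ^ n) = n :=
    emultiplicity_pow_self_of_prime Int.prime_two n
  have hlt : emultiplicity (2 : ℤ) (2 ^ n) < emultiplicity 2 m := by
    rw [hpow]
    exact lt_of_lt_of_le (by exact_mod_cast n.lt_succ_self) (le_emultiplicity_of_pow_dvd hdvd)
  refine ⟨n, ?_, ?_⟩
  · obtain rfl | rfl := hl
    · rw [emultiplicity_add_of_gt hlt, hpow]
    · rw [emultiplicity_sub_of_gt hlt, hpow]
  · obtain rfl | rfl := hl <;> simp [hm]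

lemma zero_notMem_lacInt_succ (τ : ℕ) : 0 ∉ lacInt (τ + 1) := fun h ↦ by
  obtain ⟨n, hn, -⟩ := exists_of_mem_lacInt_succ h
  simp at hn

lemma lacInt_succ_emultiplicity_eq_subset (τ n : ℕ) :
    {l ∈ lacInt (τ + 1) | emultiplicity 2 l = n} ⊆
      (· - 2 ^ n) ⁻¹' lacInt τ ∪ (· - (-2 ^ n)) ⁻¹' lacInt τ := by
  rintro l ⟨hl, hln⟩
  obtain ⟨k, hk, hmem⟩ := exists_of_mem_lacInt_succ hl
  obtain rfl : k = n := by exact_mod_cast hk.symm.trans hln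
  simpa using hmem

lemma isRudinSet_lacInt {q : ℝ≥0} (hq : 2 ≤ q) (τ : ℕ) :
    IsRudinSet q (((1 + 2 * q) * 2) ^ τ) (lacInt τ) := by
  have hq₁ : (1 : ℝ≥0∞) ≤ q := mod_cast one_le_two.trans hq
  induction τ with
  | zero => simpa [lacInt] using IsRudinSet.singleton (zero_lt_one.trans_le hq₁).ne' 0
  | succ τ ih =>
    rw [pow_succ', mul_assoc]
    exact .of_forall_emultiplicity_eq hq (zero_notMem_lacInt_succ τ) fun n ↦
      ((ih.preimage_sub _).union hq₁ (ih.preimage_sub _)).mono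
        (lacInt_succ_emultiplicity_eq_subset τ n)

/-! ### Endpoints of Littlewood–Paley intervals -/

/-- The lacunary integers of order `τ` divisible by `2 ^ m`, as real numbers: they contain the
endpoints of the intervals of length `2 ^ m` in `Λ_τ`. -/
def lacDvd (τ m : ℕ) : Set ℝ := (↑) '' {l ∈ lacInt τ | 2 ^ m ∣ l}

lemma lacDvd_antitone (τ : ℕ) : Antitone (lacDvd τ) := fun _ _ h ↦
  Set.image_mono fun _ hl ↦ ⟨hl.1, (pow_dvd_pow 2 h).trans hl.2⟩

lemma add_two_pow_mem_lacDvd {τ n m : ℕ} {x : ℝ} (hx : x ∈ lacDvd τ n) (hm : m < n) :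
    x + 2 ^ m ∈ lacDvd (τ + 1) m := by
  obtain ⟨l, ⟨hl, hdvd⟩, rfl⟩ := hx
  exact ⟨l + 2 ^ m, ⟨⟨m, l, hl, (pow_dvd_pow 2 hm).trans hdvd, .inl rfl⟩,
    ((pow_dvd_pow 2 hm.le).trans hdvd).add dvd_rfl⟩, by push_cast; rfl⟩

lemma sub_two_pow_mem_lacDvd {τ n m : ℕ} {x : ℝ} (hx : x ∈ lacDvd τ n) (hm : m < n) :
    x - 2 ^ m ∈ lacDvd (τ + 1) m := by
  obtain ⟨l, ⟨hl, hdvd⟩, rfl⟩ := hx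
  exact ⟨l - 2 ^ m, ⟨⟨m, l, hl, (pow_dvd_pow 2 hm).trans hdvd, .inr rfl⟩,
    ((pow_dvd_pow 2 hm.le).trans hdvd).sub dvd_rfl⟩, by push_cast; rfl⟩

lemma zero_mem_lacDvd_zero (m : ℕ) : 0 ∈ lacDvd 0 m := ⟨0, ⟨rfl, dvd_zero _⟩, Int.cast_zero⟩

lemma isDyadicI_of_mem_lambda : ∀ {τ : ℕ} {p : ℝ × ℝ}, p ∈ Lambda τ → IsDyadicI p
  | 1, _, ⟨k, h⟩ => by
    obtain rfl | rfl := h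
    · exact ⟨k, 1, by simp, by simp [zpow_add₀, one_add_one_eq_two, mul_comm]⟩
    · exact ⟨k, -2, by simp [zpow_add₀, mul_comm], by norm_num⟩
  | _ + 2, _, hp => by
    simp only [Lambda, mem_iUnion] at hp
    obtain ⟨I, -, hpI⟩ := hp
    exact hpI.1

lemma IsDyadicI.exists_length_eq_two_pow {p : ℝ × ℝ} (hp : IsDyadicI p) (hlen : 1 ≤ p.2 - p.1) :
    ∃ m : ℕ, p.2 - p.1 = 2 ^ m := by
  obtain ⟨k, n, h₁, h₂⟩ := hp
  have hk : p.2 - p.1 = 2 ^ k := by rw [h₁, h₂]; ring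
  obtain ⟨m, rfl⟩ := Int.eq_ofNat_of_zero_le ((one_le_zpow_iff_right₀ one_lt_two).mp (hk ▸ hlen))
  exact ⟨m, by rw [hk, zpow_natCast]⟩

lemma eq_of_mem_whitneyP {I L : ℝ × ℝ} {m : ℕ} (hL : L ∈ WhitneyP I) (hm : L.2 - L.1 = 2 ^ m) :
    L = (I.1 + 2 ^ m, I.1 + 2 ^ (m + 1)) ∨ L = (I.2 - 2 ^ (m + 1), I.2 - 2 ^ m) := by
  obtain ⟨-, -, -, hmin, -⟩ := hL
  have hpow : (2 : ℝ) ^ (m + 1) = 2 ^ m * 2 := pow_succ 2 m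
  refine (min_choice (L.1 - I.1) (I.2 - L.2)).imp (fun h ↦ ?_) fun h ↦ ?_ <;>
    ext <;> simp only [hpow] <;> linarith

lemma add_two_le_of_mem_whitneyP {I L : ℝ × ℝ} {m n : ℕ} (hL : L ∈ WhitneyP I)
    (hm : L.2 - L.1 = 2 ^ m) (hn : I.2 - I.1 = 2 ^ n) : m + 2 ≤ n := by
  obtain ⟨-, -, -, hmin, -⟩ := hL
  have hleft : L.2 - L.1 ≤ L.1 - I.1 := hmin ▸ min_le_left _ _
  have hright : L.2 - L.1 ≤ I.2 - L.2 := hmin ▸ min_le_right _ _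
  have hlt : (2 : ℝ) ^ (m + 1) < 2 ^ n := by
    rw [pow_succ, ← hm, ← hn]
    have : 0 < L.2 - L.1 := hm ▸ by positivity
    linarith
  exact (pow_lt_pow_iff_right₀ one_lt_two).mp hlt

lemma endpoints_mem_lacDvd {τ m : ℕ} {p : ℝ × ℝ} (hp : p ∈ Lambda (τ + 1))
    (hm : p.2 - p.1 = 2 ^ m) : p.1 ∈ lacDvd (τ + 1) m ∧ p.2 ∈ lacDvd (τ + 1) m := by
  induction τ generalizing p m with
  | zero =>
    obtain ⟨k, hk⟩ := hp
    have hsucc : (2 : ℝ) ^ (k + 1) = 2 ^ k * 2 := by rw [zpow_add₀ two_ne_zero, zpow_one]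
    have hpow : (2 : ℝ) ^ k = 2 ^ m := by
      obtain rfl | rfl := hk <;> simp only [hsucc] at hm <;> linarith
    rw [hsucc, hpow, ← pow_succ] at hk
    have hadd (i : ℕ) := add_two_pow_mem_lacDvd (zero_mem_lacDvd_zero (i + 1)) i.lt_succ_self
    have hsub (i : ℕ) := sub_two_pow_mem_lacDvd (zero_mem_lacDvd_zero (i + 1)) i.lt_succ_self
    simp only [zero_add] at hadd
    simp only [zero_sub] at hsub
    obtain rfl | rfl := hk
    · exact ⟨hadd m, lacDvd_antitone _ m.le_succ (hadd (m + 1))⟩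
    · exact ⟨lacDvd_antitone _ m.le_succ (hsub (m + 1)), hsub m⟩
  | succ τ ih =>
    simp only [Lambda, mem_iUnion] at hp
    obtain ⟨I, hI, hpI⟩ := hp
    obtain ⟨n, hn⟩ := (isDyadicI_of_mem_lambda hI).exists_length_eq_two_pow <| by
      have hpos : (1 : ℝ) ≤ 2 ^ m := one_le_pow₀ one_le_two
      linarith [hpI.2.1, hpI.2.2.1]
    have hmn := add_two_le_of_mem_whitneyP hpI hm hn
    obtain ⟨h₁, h₂⟩ := ih hI hn
    obtain rfl | rfl := eq_of_mem_whitneyP hpI hm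
    · exact ⟨add_two_pow_mem_lacDvd h₁ (by omega),
        lacDvd_antitone _ m.le_succ (add_two_pow_mem_lacDvd h₁ (by omega))⟩
    · exact ⟨lacDvd_antitone _ m.le_succ (sub_two_pow_mem_lacDvd h₂ (by omega)),
        sub_two_pow_mem_lacDvd h₂ (by omega)⟩

lemma lacT_one_subset (τ : ℕ) : lacT τ 1 ⊆ (↑) '' lacInt τ := by
  cases τ with
  | zero => simp [lacT, lacInt]
  | succ τ =>
    rw [lacT, if_neg τ.succ_ne_zero]
    rintro x ⟨p, hp, hlen, hx⟩
    obtain ⟨m, hm⟩ := (isDyadicI_of_mem_lambda hp).exists_length_eq_two_pow hlen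
    obtain ⟨h₁, h₂⟩ := endpoints_mem_lacDvd hp hm
    refine Set.image_mono (Set.sep_subset _ (2 ^ m ∣ ·)) ?_
    obtain rfl | rfl := hx
    exacts [h₁, h₂]

/-! ### The inequality on `[0, 1]` -/

lemma fourier_neg_coe_apply (l : ℤ) (y : ℝ) :
    fourier (-l) (y : UnitAddCircle) = Complex.exp (-Complex.I * ((2 * π * l * y : ℝ) : ℂ)) := by
  rw [fourier_coe_apply]
  congr 1
  push_cast
  ring

lemma setIntegral_Ioc_norm_sum_exp_rpow_eq_lpNorm {q : ℝ≥0} (hq : q ≠ 0) (s : Finset ℤ)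
    (a : ℤ → ℂ) :
    (∫ y in Ioc (0 : ℝ) 1,
      ‖∑ l ∈ s, a l * Complex.exp (-Complex.I * ((2 * π * l * y : ℝ) : ℂ))‖ ^ (q : ℝ)) ^
        (1 / q : ℝ) = lpNorm (trigPoly s a) q volume := by
  rw [one_div,
    lpNorm_nnreal_eq_integral_norm_rpow hq (trigPoly s a).continuous.aestronglyMeasurable,
    ← UnitAddCircle.integral_preimage 0]
  simp only [trigPoly_apply, fourier_neg_coe_apply, zero_add]

lemma exists_image_intCast_eq_of_mem_lacT {τ : ℕ} {s : Finset ℝ} (hs : ∀ l ∈ s, l ∈ lacT τ 1) :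
    ∃ t : Finset ℤ, (t : Set ℤ) ⊆ lacInt τ ∧ t.image (↑) = s :=
  Finset.subset_set_image_iff.mp fun l hl ↦ lacT_one_subset τ (hs l hl)

lemma rpow_neg_mul_le_of_sq_le {q x : ℝ} (hq : 2 ≤ q) (τ : ℕ) (h : x ^ 2 ≤ ((1 + 2 * q) * 2) ^ τ) :
    q ^ (-(τ : ℝ) / 2) * x ≤ 5 ^ ((τ : ℝ) / 2) := by
  have hq₀ : 0 < q := by linarith
  have hx : x ≤ (5 * q) ^ ((τ : ℝ) / 2) := by
    rw [div_eq_mul_one_div, rpow_natCast_mul (by positivity), ← sqrt_eq_rpow]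
    exact le_sqrt_of_sq_le (h.trans (pow_le_pow_left₀ (by positivity) (by linarith) τ))
  calc q ^ (-(τ : ℝ) / 2) * x ≤ q ^ (-(τ : ℝ) / 2) * (5 * q) ^ ((τ : ℝ) / 2) := by gcongr
    _ = 5 ^ ((τ : ℝ) / 2) := by
      rw [mul_rpow (by norm_num) hq₀.le, mul_left_comm, ← rpow_add hq₀, neg_div, neg_add_cancel,
        rpow_zero, mul_one]

/-- Dual Zygmund–Bonami inequality.  Let `τ ≥ 1` and let `{a_λ}` be a
finitely supported collection of complex coefficients indexed by `λ ∈ lac_τ^1` with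
`Σ_λ |a_λ|² = 1`.  Then the trigonometric polynomial `p(y) = Σ_λ a_λ e^{−2πiλy}` satisfies
`‖p‖_{exp(L^{2/τ})([0,1])} ≲_τ 1`, equivalently `sup_{q ≥ 2} q^{−τ/2}‖p‖_{L^q([0,1])} ≲_τ 1`. -/
theorem dual_zygmund_bonami (τ : ℕ) (hτ : 1 ≤ τ) :
    ∃ C > 0, ∀ (s : Finset ℝ) (a : ℝ → ℂ),
      (∀ l ∈ s, l ∈ lacT τ 1) → (∑ l ∈ s, ‖a l‖^2) = 1 →
      ∀ q : ℝ, 2 ≤ q →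
        q ^ (-(τ:ℝ)/2) *
          (∫ y in Set.Ioc (0:ℝ) 1,
            ‖∑ l ∈ s, a l * Complex.exp (-Complex.I * ((2 * π * l * y : ℝ) : ℂ))‖ ^ q) ^ (1/q)
          ≤ C := by
  refine ⟨5 ^ ((τ : ℝ) / 2), by positivity, fun s a hs ha q hq ↦ ?_⟩
  lift q to ℝ≥0 using by linarith
  have hq : 2 ≤ q := hq
  obtain ⟨t, ht, rfl⟩ := exists_image_intCast_eq_of_mem_lacT hs
  simp only [Finset.sum_image Int.cast_injective.injOn] at ha ⊢
  have key := isRudinSet_lacInt hq τ t (fun l ↦ a l) ht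
  rw [ha, mul_one] at key
  rw [setIntegral_Ioc_norm_sum_exp_rpow_eq_lpNorm (by positivity)]
  exact rpow_neg_mul_le_of_sq_le hq τ key
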